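/- Let μ be the Gaussian measure on ℝ^N with density b(x) = (4π)^{−N/2} (μ₁⋯μ_N)^{−1/2} exp(−Σᵢ xᵢ²/(4μᵢ)) with μᵢ > 0. Then for 2 ≤ p < ∞ and every h ∈ {1,…,N} there is a constant K_p such that for all u ∈ C_0^∞(ℝ^N): ∫ |x_h u(x)|^p dμ(x) ≤ K_p ∫ (|u(x)|^p + |Du(x)|^p) dμ(x). -/

import Mathlib

/-!
Write `t = x_h`, `a = μ_h`, `s = √(1 + t²)`, and let `E` be the unnormalised Gaussian
weight, so that `D_h E = -t / (2a) · E`. The weight `|t|^{p-2}` is replaced by the smooth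
`s^{p-2} = (1 + t²)^{(p-2)/2}`, so that only `|u|^p` in `F = t s^{p-2} |u|^p` is differentiated
at a possible zero of its base. Since `F E` is `C¹` with compact support, `∫ D_h (F E) = 0`.

Put `X = s |u|`. Since `t² s^{p-2} = s^p - s^{p-2}`, expanding `D_h (F E)` expresses `X^p E` as
`-2a D_h (F E)` plus terms bounded by constants times `X^{p-1} |u| E` and `X^{p-1} |D_h u| E`.
Young's inequality (`young_absorb`) bounds each of the latter by `X^p E / 4` plus a multiple of
`|u|^p E` or `|D_h u|^p E`. The resulting pointwise inequality is `pointwise_bound`, and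
integrating it gives the claim because `|t u| ≤ X`.
-/

open MeasureTheory Real

/-- Young's inequality in absorbing form. It holds because either `4 M U ≤ X`, and the left-hand
side is at most `X ^ p / 4`, or `X` is dominated by a multiple of `U`. -/
lemma young_absorb (p : ℝ) (hp : 2 ≤ p) (M : ℝ) (hM : 0 < M) :
    ∃ C : ℝ, 0 ≤ C ∧ ∀ X U : ℝ, 0 ≤ X → 0 ≤ U →
      M * (X ^ (p - 1) * U) ≤ X ^ p / 4 + C * U ^ p := by
  have key : ∀ Y : ℝ, 0 ≤ Y → Y ^ p = Y ^ (p - 1) * Y := by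
    intro Y hY
    have h := Real.rpow_add_one' hY (y := p - 1) (by linarith)
    rwa [sub_add_cancel] at h
  refine ⟨M * (4 * M) ^ (p - 1), by positivity, fun X U hX hU => ?_⟩
  rcases le_total (4 * M * U) X with h | h
  · have h1 : 0 ≤ X ^ (p - 1) := by positivity
    have h2 : 0 ≤ M * (4 * M) ^ (p - 1) * U ^ p := by positivity
    rw [key X hX]
    nlinarith [mul_le_mul_of_nonneg_left h h1]
  · have h1 : X ^ (p - 1) ≤ (4 * M) ^ (p - 1) * U ^ (p - 1) := by
      rw [← Real.mul_rpow (by positivity) hU]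
      exact Real.rpow_le_rpow hX h (by linarith)
    have h2 : 0 ≤ X ^ p / 4 := by positivity
    have h3 := mul_le_mul_of_nonneg_left (mul_le_mul_of_nonneg_right h1 hU) hM.le
    rw [key U hU]
    nlinarith

/-- The value `D_h (F E) / E`, where `F = t (1 + t²)^{(p-2)/2} |v|^p`, `t` is the `h`-th
coordinate, `v` and `d` are the values of `u` and of its `h`-th partial derivative, and `a` is the
Gaussian parameter `μ_h`. -/
noncomputable def divTerm (p a t v d : ℝ) : ℝ :=
  ((1 + t ^ 2) ^ ((p - 2) / 2) + t * (2 * t * ((p - 2) / 2) * (1 + t ^ 2) ^ ((p - 2) / 2 - 1)))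
      * |v| ^ p
    + t * (1 + t ^ 2) ^ ((p - 2) / 2) * (p * |v| ^ (p - 2) * v * d)
    - t / (2 * a) * (t * (1 + t ^ 2) ^ ((p - 2) / 2) * |v| ^ p)

lemma pointwise_bound (p : ℝ) (hp : 2 ≤ p) (a : ℝ) (ha : 0 < a) :
    ∃ K : ℝ, ∀ t v d D : ℝ, |d| ≤ D →
      |t * v| ^ p / 2 ≤ K * (|v| ^ p + D ^ p) - 2 * a * divTerm p a t v d := by
  obtain ⟨C₁, hC₁, h₁⟩ := young_absorb p hp (1 + 2 * a * (p - 1)) (by nlinarith)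
  obtain ⟨C₂, hC₂, h₂⟩ := young_absorb p hp (2 * a * p) (by positivity)
  refine ⟨C₁ + C₂, fun t v d D hd => ?_⟩
  have hD : 0 ≤ D := (abs_nonneg d).trans hd
  set U := |v| with hU
  have hU0 : 0 ≤ U := abs_nonneg v
  set s := √(1 + t ^ 2) with hs
  have hs2 : s ^ 2 = 1 + t ^ 2 := Real.sq_sqrt (by positivity)
  have hs1 : 1 ≤ s := by rw [hs]; exact Real.one_le_sqrt.2 (by nlinarith)
  have hs0 : 0 < s := by linarith
  have hts : |t| ≤ s := by rw [hs]; exact Real.abs_le_sqrt (by linarith)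
  set q := (1 + t ^ 2) ^ ((p - 2) / 2) with hq
  have hqs : q = s ^ (p - 2) := by
    rw [hq, ← hs2, ← Real.rpow_natCast, ← Real.rpow_mul hs0.le]
    congr 1; push_cast; ring
  have hq0 : 0 < q := by positivity
  set r := (1 + t ^ 2) ^ ((p - 2) / 2 - 1) with hr
  have hr0 : 0 < r := by positivity
  have hqr : q = r * (1 + t ^ 2) := by
    rw [hq, hr, ← Real.rpow_add_one (by positivity)]; congr 1; ring
  -- Powers are split as `Y ^ p = Y ^ (p-2) * Y * Y`, which stays valid at `Y = 0`, `p = 2`.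
  have key1 : ∀ Y : ℝ, 0 ≤ Y → Y ^ (p - 1) = Y ^ (p - 2) * Y := by
    intro Y hY
    have h := Real.rpow_add_one' hY (y := p - 2) (by linarith)
    rwa [show p - 2 + 1 = p - 1 by ring] at h
  have key2 : ∀ Y : ℝ, 0 ≤ Y → Y ^ p = Y ^ (p - 1) * Y := by
    intro Y hY
    have h := Real.rpow_add_one' hY (y := p - 1) (by linarith)
    rwa [sub_add_cancel] at h
  have hX0 : 0 ≤ s * U := by positivity
  set w := U ^ (p - 2) with hw
  have hw0 : 0 ≤ w := by positivity
  have hX1 : (s * U) ^ (p - 1) = q * w * (s * U) := by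
    rw [key1 _ hX0, Real.mul_rpow hs0.le hU0, ← hqs]
  have hXp : (s * U) ^ p = q * w * (s * U) * (s * U) := by rw [key2 _ hX0, hX1]
  have hUp : U ^ p = w * U * U := by rw [key2 _ hU0, key1 _ hU0]
  have e1 := h₁ (s * U) U hX0 hU0
  have e2 := h₂ (s * U) D hX0 hD
  have e3 : |t * v| ^ p ≤ (s * U) ^ p := by
    apply Real.rpow_le_rpow (abs_nonneg _) _ (by linarith)
    rw [abs_mul]; exact mul_le_mul_of_nonneg_right hts hU0
  -- The zeroth-order terms: `q` and `t q'` are both dominated by `q`, and `1 ≤ s`.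
  have e4 : (q + 2 * a * (q + t * (2 * t * ((p - 2) / 2) * r))) * U ^ p
      ≤ (1 + 2 * a * (p - 1)) * ((s * U) ^ (p - 1) * U) := by
    have i1 : t * (2 * t * ((p - 2) / 2) * r) ≤ (p - 2) * q := by
      rw [hqr]; nlinarith [mul_nonneg (sub_nonneg.2 hp) hr0.le]
    have i2 : q + 2 * a * (q + t * (2 * t * ((p - 2) / 2) * r)) ≤ (1 + 2 * a * (p - 1)) * q := by
      nlinarith
    have i3 : 0 ≤ w * U * U := by positivity
    have i4 : 0 ≤ (1 + 2 * a * (p - 1)) * q :=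
      mul_nonneg (by nlinarith) hq0.le
    rw [hX1, hUp]
    calc _ ≤ (1 + 2 * a * (p - 1)) * q * (w * U * U) := mul_le_mul_of_nonneg_right i2 i3
      _ ≤ (1 + 2 * a * (p - 1)) * q * (w * U * U) * s :=
        le_mul_of_one_le_right (mul_nonneg i4 i3) hs1
      _ = _ := by ring
  have e5 : 2 * a * (t * q * (p * w * v * d)) ≤ 2 * a * p * ((s * U) ^ (p - 1) * D) := by
    have i1 : t * v * d ≤ s * U * D := by
      refine (le_abs_self _).trans ?_
      rw [abs_mul, abs_mul]
      gcongr
    have i2 : 0 ≤ 2 * a * p * q * w := by positivity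
    rw [hX1]
    calc _ = 2 * a * p * q * w * (t * v * d) := by ring
      _ ≤ 2 * a * p * q * w * (s * U * D) := mul_le_mul_of_nonneg_left i1 i2
      _ = _ := by ring
  have e6 : 2 * a * (t / (2 * a) * (t * q * U ^ p)) = (s * U) ^ p - q * U ^ p := by
    rw [hXp, hUp]
    have : 2 * a * (t / (2 * a) * (t * q * (w * U * U))) = t ^ 2 * q * (w * U * U) := by
      field_simp
    rw [this]
    linear_combination (-(q * w * U * U)) * hs2
  have hUp0 : 0 ≤ U ^ p := by positivity
  have hDp0 : 0 ≤ D ^ p := by positivity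
  have f1 := mul_nonneg hC₁ hDp0
  have f2 := mul_nonneg hC₂ hUp0
  unfold divTerm
  rw [← hq, ← hr, ← hU, ← hw, mul_sub, mul_add (2 * a), e6]
  rw [add_mul, mul_assoc (2 * a)] at e4
  have e7 : (C₁ + C₂) * (U ^ p + D ^ p) = C₁ * U ^ p + C₂ * D ^ p + C₁ * D ^ p + C₂ * U ^ p := by
    ring
  rw [e7]
  linarith

/-- The integral of a partial derivative of a compactly supported `C¹` function vanishes. -/
lemma integral_fderiv_apply_eq_zero {N : ℕ} (g : (Fin N → ℝ) → ℝ) (hg : ContDiff ℝ 1 g)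
    (hc : HasCompactSupport g) (e : Fin N → ℝ) : ∫ x, fderiv ℝ g x e = 0 := by
  have hi : Integrable (fun x => fderiv ℝ g x e) :=
    ((hg.continuous_fderiv one_ne_zero).clm_apply continuous_const).integrable_of_hasCompactSupport
      (hc.fderiv_apply (𝕜 := ℝ) e)
  have := integral_mul_fderiv_eq_neg_fderiv_mul_of_integrable (μ := volume) (𝕜 := ℝ)
    (f := fun _ : Fin N → ℝ => (1 : ℝ)) (g := g) (v := e)
    (by simp) (by simpa using hi)
    (by simpa using hg.continuous.integrable_of_hasCompactSupport hc)
    (fun x _ => differentiableAt_const _)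
    (fun x _ => (hg.differentiable one_ne_zero).differentiableAt)
  simpa using this

/-- The unnormalised Gaussian weight with parameters `μv`. -/
noncomputable def gaussWeight {N : ℕ} (μv : Fin N → ℝ) (x : Fin N → ℝ) : ℝ :=
  Real.exp (-∑ i, (x i) ^ 2 / (4 * μv i))

/-- The function `F E` whose `h`-th partial derivative is integrated:
`x_h (1 + x_h²)^{(p-2)/2} |u|^p` times the Gaussian weight. -/
noncomputable def fluxFun {N : ℕ} (μv : Fin N → ℝ) (p : ℝ) (h : Fin N)
    (u : (Fin N → ℝ) → ℝ) (x : Fin N → ℝ) : ℝ :=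
  x h * (1 + x h ^ 2) ^ ((p - 2) / 2) * |u x| ^ p * gaussWeight μv x

lemma contDiff_gaussWeight {N : ℕ} (μv : Fin N → ℝ) : ContDiff ℝ 1 (gaussWeight μv) := by
  unfold gaussWeight
  fun_prop

lemma contDiff_fluxFun {N : ℕ} (μv : Fin N → ℝ) (p : ℝ) (hp : 2 ≤ p) (h : Fin N)
    (u : (Fin N → ℝ) → ℝ) (hu : ContDiff ℝ 1 u) : ContDiff ℝ 1 (fluxFun μv p h u) := by
  have h1 : ContDiff ℝ 1 (fun x : Fin N → ℝ => (1 + x h ^ 2) ^ ((p - 2) / 2)) :=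
    ContDiff.rpow_const_of_ne (by fun_prop) (fun x => by positivity)
  have h2 : ContDiff ℝ 1 (fun x => |u x| ^ p) :=
    (contDiff_norm_rpow (E := ℝ) (p := p) (by linarith)).comp hu
  have h3 : ContDiff ℝ 1 (fun x : Fin N → ℝ => x h) := by fun_prop
  exact ((h3.mul h1).mul h2).mul (contDiff_gaussWeight μv)

lemma fderiv_fluxFun {N : ℕ} (μv : Fin N → ℝ) (hμv : ∀ i, 0 < μv i) (p : ℝ) (hp : 2 ≤ p)
    (h : Fin N) (u : (Fin N → ℝ) → ℝ) (hu : ContDiff ℝ 1 u) (x : Fin N → ℝ) :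
    fderiv ℝ (fluxFun μv p h u) x (Pi.single h 1)
      = divTerm p (μv h) (x h) (u x) (fderiv ℝ u x (Pi.single h 1)) * gaussWeight μv x := by
  have hF := (((contDiff_fluxFun μv p hp h u hu).differentiable one_ne_zero
    x).hasFDerivAt.hasLineDerivAt (Pi.single h 1))
  have hU := (((hu.differentiable one_ne_zero) x).hasFDerivAt.hasLineDerivAt (Pi.single h 1))
  refine HasDerivAt.unique hF ?_
  unfold HasLineDerivAt at hU
  have ht : ∀ i, HasDerivAt (fun τ : ℝ => (x + τ • (Pi.single h (1 : ℝ) : Fin N → ℝ)) i)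
      ((Pi.single h (1 : ℝ) : Fin N → ℝ) i) 0 := by
    intro i
    simpa using ((hasDerivAt_id (0 : ℝ)).mul_const
      ((Pi.single h (1 : ℝ) : Fin N → ℝ) i)).const_add (x i)
  have hth := ht h
  rw [Pi.single_eq_same] at hth
  have hpow := ((hth.fun_pow 2).const_add 1).rpow_const (p := (p - 2) / 2)
    (Or.inl (by positivity))
  have habs := (hasDerivAt_abs_rpow (u (x + (0 : ℝ) • Pi.single h (1 : ℝ))) (p := p)
    (by linarith)).comp (0 : ℝ) hU
  have hE := (HasDerivAt.fun_sum (u := Finset.univ) (fun i _ =>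
    ((ht i).fun_pow 2).div_const (4 * μv i))).fun_neg.exp
  have hall := ((hth.fun_mul hpow).fun_mul habs).fun_mul hE
  have hsum : ∑ i, (2 : ℝ) * x i * (Pi.single h (1 : ℝ) : Fin N → ℝ) i / (4 * μv i)
      = x h / (2 * μv h) := by
    rw [Finset.sum_eq_single h]
    · have := (hμv h).ne'
      simp only [Pi.single_eq_same]; field_simp; ring
    · intro i _ hi
      simp [Pi.single_eq_of_ne hi]
    · simp
  refine hall.congr_deriv ?_
  simp only [zero_smul, add_zero, Nat.cast_ofNat, Nat.add_one_sub_one, pow_one, Function.comp,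
    hsum, divTerm, gaussWeight]
  ring

/-- The inequality with respect to Lebesgue measure and the unnormalised weight. -/
lemma weighted_bound (N : ℕ) (μv : Fin N → ℝ) (hμv : ∀ i, 0 < μv i)
    (p : ℝ) (hp : 2 ≤ p) (h : Fin N) :
    ∃ K : ℝ, ∀ u : (Fin N → ℝ) → ℝ, ContDiff ℝ 1 u → HasCompactSupport u →
      ∫ x, |x h * u x| ^ p * gaussWeight μv x
        ≤ K * ∫ x, (|u x| ^ p + ‖fderiv ℝ u x‖ ^ p) * gaussWeight μv x := by
  obtain ⟨K, hK⟩ := pointwise_bound p hp (μv h) (hμv h)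
  refine ⟨2 * K, fun u hu hc => ?_⟩
  have hp0 : 0 < p := by linarith
  have hEc := (contDiff_gaussWeight μv).continuous
  have hfc := hu.continuous_fderiv one_ne_zero
  have hFd := contDiff_fluxFun μv p hp h u hu
  have hFc : HasCompactSupport (fluxFun μv p h u) := by
    refine hc.mono fun x hx => ?_
    contrapose! hx
    simp only [Function.mem_support, not_not] at hx ⊢
    simp [fluxFun, hx, Real.zero_rpow hp0.ne']
  have iL : Integrable (fun x => |x h * u x| ^ p * gaussWeight μv x) := by
    refine Continuous.integrable_of_hasCompactSupport ?_ ?_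
    · refine Continuous.mul (Continuous.rpow_const ?_ (fun x => Or.inr hp0.le)) hEc
      exact ((continuous_apply h).mul hu.continuous).abs
    · refine hc.mono fun x hx => ?_
      contrapose! hx
      simp only [Function.mem_support, not_not] at hx ⊢
      simp [hx, Real.zero_rpow hp0.ne']
  have iR : Integrable (fun x => (|u x| ^ p + ‖fderiv ℝ u x‖ ^ p) * gaussWeight μv x) := by
    refine Continuous.integrable_of_hasCompactSupport ?_ ?_
    · exact ((hu.continuous.abs.rpow_const (fun x => Or.inr hp0.le)).add
        (hfc.norm.rpow_const (fun x => Or.inr hp0.le))).mul hEc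
    · have c1 : HasCompactSupport (fun x => |u x| ^ p) :=
        hc.comp_left (g := fun v : ℝ => |v| ^ p) (by simp [Real.zero_rpow hp0.ne'])
      have c2 : HasCompactSupport (fun x => ‖fderiv ℝ u x‖ ^ p) :=
        (hc.fderiv (𝕜 := ℝ)).comp_left
          (g := fun v : (Fin N → ℝ) →L[ℝ] ℝ => ‖v‖ ^ p) (by simp [Real.zero_rpow hp0.ne'])
      exact (c1.add c2).mul_right
  have iF : Integrable (fun x => fderiv ℝ (fluxFun μv p h u) x (Pi.single h 1)) :=
    ((hFd.continuous_fderiv one_ne_zero).clm_apply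
      continuous_const).integrable_of_hasCompactSupport (hFc.fderiv_apply (𝕜 := ℝ) _)
  have hzero := integral_fderiv_apply_eq_zero _ hFd hFc (Pi.single h 1)
  have hmono : ∫ x, |x h * u x| ^ p * gaussWeight μv x
      ≤ ∫ x, (2 * K * ((|u x| ^ p + ‖fderiv ℝ u x‖ ^ p) * gaussWeight μv x)
        - 4 * μv h * fderiv ℝ (fluxFun μv p h u) x (Pi.single h 1)) := by
    refine integral_mono iL ((iR.const_mul _).sub (iF.const_mul _)) fun x => ?_
    have hd : |fderiv ℝ u x (Pi.single h 1)| ≤ ‖fderiv ℝ u x‖ := by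
      have he : ‖(Pi.single h 1 : Fin N → ℝ)‖ = 1 := by rw [Pi.norm_single, norm_one]
      simpa [he] using (fderiv ℝ u x).le_opNorm (Pi.single h 1)
    have hE0 : 0 ≤ gaussWeight μv x := (Real.exp_pos _).le
    have := mul_le_mul_of_nonneg_right (hK (x h) (u x) _ _ hd) hE0
    simp only [fderiv_fluxFun μv hμv p hp h u hu x]
    linarith
  rwa [integral_sub (iR.const_mul _) (iF.const_mul _), integral_const_mul, integral_const_mul,
    hzero, mul_zero, sub_zero] at hmono

/-- Gaussian Hardy-type inequality (Lemma `alessandra`, case `p ≥ 2`): for the Gaussian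
measure `μ` with density `b(x) = (4π)^{−N/2}(μ₁⋯μ_N)^{−1/2} exp(−Σ xᵢ²/(4μᵢ))` and every
`h`, there is `K_p` with `∫ |x_h u|^p dμ ≤ K_p ∫ (|u|^p + |Du|^p) dμ` for all
`u ∈ C₀^∞(ℝᴺ)`. -/
theorem stmt_12 (N : ℕ) (μv : Fin N → ℝ) (hμv : ∀ i, 0 < μv i)
    (p : ℝ) (hp : 2 ≤ p) (h : Fin N) :
    ∃ K : ℝ, ∀ u : (Fin N → ℝ) → ℝ,
      ContDiff ℝ (⊤ : ℕ∞) u → HasCompactSupport u →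
      (∫ x : Fin N → ℝ, |x h * u x| ^ p ∂((volume : Measure (Fin N → ℝ)).withDensity
          (fun x => ENNReal.ofReal
            ((4 * π) ^ (-(N : ℝ)/2) * (∏ i, μv i) ^ (-(1:ℝ)/2)
              * Real.exp (-∑ i, (x i) ^ 2 / (4 * μv i))))))
        ≤ K * ∫ x : Fin N → ℝ, (|u x| ^ p + ‖fderiv ℝ u x‖ ^ p)
            ∂((volume : Measure (Fin N → ℝ)).withDensity
              (fun x => ENNReal.ofReal
                ((4 * π) ^ (-(N : ℝ)/2) * (∏ i, μv i) ^ (-(1:ℝ)/2)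
                  * Real.exp (-∑ i, (x i) ^ 2 / (4 * μv i))))) := by
  obtain ⟨K, hK⟩ := weighted_bound N μv hμv p hp h
  refine ⟨K, fun u hu hc => ?_⟩
  have hu1 : ContDiff ℝ 1 u := hu.of_le (by exact_mod_cast le_top)
  set c : ℝ := (4 * π) ^ (-(N : ℝ)/2) * (∏ i, μv i) ^ (-(1:ℝ)/2) with hcdef
  have hc0 : 0 ≤ c := by
    have : 0 ≤ ∏ i, μv i := Finset.prod_nonneg fun i _ => (hμv i).le
    positivity
  have hconv : ∀ f : (Fin N → ℝ) → ℝ,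
      ∫ x, f x ∂((volume : Measure (Fin N → ℝ)).withDensity
        (fun x => ENNReal.ofReal (c * Real.exp (-∑ i, (x i) ^ 2 / (4 * μv i)))))
      = c * ∫ x, f x * gaussWeight μv x := by
    intro f
    rw [integral_withDensity_eq_integral_toReal_smul (by fun_prop)
      (Filter.Eventually.of_forall fun x => ENNReal.ofReal_lt_top), ← integral_const_mul]
    refine integral_congr_ae (Filter.Eventually.of_forall fun x => ?_)
    simp only [smul_eq_mul]
    rw [ENNReal.toReal_ofReal (by positivity), gaussWeight]
    ring
  rw [hconv, hconv]
  have := mul_le_mul_of_nonneg_left (hK u hu1 hc) hc0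
  linarith
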